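/- arXiv:1104.3659 — 3 statements merged into one kernel-verified Lean document; each statement's English description precedes it below -/
import Mathlib

section
/- For every positive integer n, define A_n = ∑_{k=0}^{n−1} (−1)^{n−1−k} C(2k, k)^5 (205k² + 160k + 32). Then both of the following hold: A_n = 16n · C(2n, n) · ∑_{k=0}^{n−1} C(n+k−1, k)^4 (2k+n), and A_n = 8n² · C(2n, n)² · ∑_{k=0}^{n−1} (−1)^k C(2n−1, n+k) C(2n−k−2, n−k−1)². -/
/-- `A n = ∑_{k=0}^{n-1} (-1)^{n-1-k} C(2k,k)^5 (205k² + 160k + 32)`. -/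
def A (n : ℕ) : ℤ :=
  ∑ k ∈ Finset.range n,
    (-1) ^ (n - 1 - k) * (Nat.choose (2 * k) k : ℤ) ^ 5 *
      (205 * (k : ℤ) ^ 2 + 160 * k + 32)

/-!
`A` is the only sequence with `A 0 = 0` and `A (n+1) + A n = C(2n,n)^5 (205n² + 160n + 32)`, so it
suffices to check this recurrence for both right-hand sides. Each of them is, up to a factor free of
the summation index, a sum `∑_{k<n} F(n,k)`, and a Wilf–Zeilberger certificate `G` makes the
combination of `F(n+1,k)` and `F(n,k)` occurring in the recurrence equal to `G(n,k+1) - G(n,k)`. The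
recurrence then comes from the boundary value `G(n,n)` together with the extra term `F(n+1,n)`.
-/

open Finset

theorem eq_sum_neg_one_pow_mul_of_succ_add_eq {R : Type*} [Ring R] {a f : ℕ → R} (h0 : f 0 = 0)
    (hsucc : ∀ n, f (n + 1) + f n = a n) (n : ℕ) :
    f n = ∑ k ∈ range n, (-1) ^ (n - 1 - k) * a k := by
  induction n with
  | zero => simp [h0]
  | succ n ih =>
    have hneg : ∑ k ∈ range n, (-1) ^ (n + 1 - 1 - k) * a k = -f n := by
      rw [ih, ← sum_neg_distrib]
      refine sum_congr rfl fun k hk => ?_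
      have hexp : n + 1 - 1 - k = n - 1 - k + 1 := by grind
      rw [hexp, pow_succ, mul_neg_one, neg_mul]
    rw [sum_range_succ, hneg, ← hsucc n]
    simp

theorem A_eq_of_succ_add_eq {f : ℕ → ℤ} (h0 : f 0 = 0)
    (hsucc : ∀ n : ℕ, f (n + 1) + f n =
      (n.centralBinom : ℤ) ^ 5 * (205 * (n : ℤ) ^ 2 + 160 * n + 32)) (n : ℕ) :
    A n = f n := by
  rw [eq_sum_neg_one_pow_mul_of_succ_add_eq h0 hsucc n]
  simp only [A, Nat.centralBinom_eq_two_mul_choose, mul_assoc]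

section Choose

variable {R : Type*} [CommRing R]

theorem cast_mul_choose_sub_one (n k : ℕ) :
    (n : R) * (n - 1).choose k = (n - k) * n.choose k := by
  rcases n with - | n
  · rcases k with - | k <;> simp
  rcases le_or_gt k (n + 1) with hk | hk
  · have h := congrArg (Nat.cast : ℕ → R) (Nat.choose_mul_succ_eq n k)
    rw [Nat.cast_mul, Nat.cast_mul, Nat.cast_sub hk] at h
    rw [Nat.add_sub_cancel]
    linear_combination h
  · simp [Nat.choose_eq_zero_of_lt hk, Nat.choose_eq_zero_of_lt (n.lt_succ_self.trans hk)]

theorem cast_succ_mul_mul_choose_sub_one (n k : ℕ) :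
    ((n : R) + 1) * n * (n - 1).choose k = (n + 1 - k) * (n - k) * (n + 1).choose k := by
  have hn := cast_mul_choose_sub_one (R := R) n k
  have hsucc := cast_mul_choose_sub_one (R := R) (n + 1) k
  rw [Nat.add_sub_cancel, Nat.cast_succ] at hsucc
  linear_combination ((n : R) + 1) * hn + (n - k) * hsucc

theorem cast_succ_mul_choose_succ (n k : ℕ) :
    ((k : R) + 1) * n.choose (k + 1) = (n - k) * n.choose k := by
  rcases le_or_gt k n with hk | hk
  · have h := congrArg (Nat.cast : ℕ → R) (Nat.choose_succ_right_eq n k)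
    rw [Nat.cast_mul, Nat.cast_mul, Nat.cast_sub hk] at h
    push_cast at h
    linear_combination h
  · simp [Nat.choose_eq_zero_of_lt hk, Nat.choose_eq_zero_of_lt (hk.trans k.lt_succ_self)]

end Choose

theorem succ_mul_choose_two_mul_add_one (n : ℕ) :
    (n + 1) * (2 * n + 1).choose n = (2 * n + 1) * n.centralBinom := by
  have h := Nat.choose_mul_succ_eq (2 * n) n
  rw [show 2 * n + 1 - n = n + 1 by lia] at h
  rw [Nat.centralBinom_eq_two_mul_choose]
  linarith

theorem succ_mul_multichoose_succ_right (n k : ℕ) :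
    (k + 1) * n.multichoose (k + 1) = (n + k) * n.multichoose k := by
  rcases n with - | n
  · rcases k with - | k <;> simp
  · have h := Nat.add_one_mul_choose_eq (n + k) k
    rw [Nat.multichoose_eq, Nat.multichoose_eq]
    grind

theorem mul_multichoose_succ_left (n k : ℕ) :
    n * (n + 1).multichoose k = (n + k) * n.multichoose k := by
  rcases n with - | n
  · rcases k with - | k <;> simp
  · have h := Nat.choose_mul_succ_eq (n + k) k
    rw [Nat.multichoose_eq, Nat.multichoose_eq]
    grind

theorem multichoose_succ_self (n : ℕ) : (n + 1).multichoose n = n.centralBinom := by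
  rw [Nat.multichoose_eq, Nat.centralBinom_eq_two_mul_choose]
  congr 1
  lia

theorem two_mul_multichoose_self {n : ℕ} (hn : n ≠ 0) :
    2 * n.multichoose n = n.centralBinom := by
  have h : n * (n + 1).multichoose n = n * (2 * n.multichoose n) := by
    rw [mul_multichoose_succ_left]
    ring
  rw [← multichoose_succ_self, Nat.eq_of_mul_eq_mul_left (Nat.pos_of_ne_zero hn) h]

/-- The partial sum `∑_{k<K} C(n+k-1,k)^4 (2k+n)`, which at `K = n` is the sum of the first
formula. -/
def fourthPowerSum (n K : ℕ) : ℤ :=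
  ∑ k ∈ range K, (n.multichoose k : ℤ) ^ 4 * (2 * k + n)

/-- The Wilf–Zeilberger certificate for `fourthPowerSum`, scaled by `n ^ 4` to be integral. -/
def fourthPowerCert (n k : ℕ) : ℤ :=
  (n.multichoose k : ℤ) ^ 4 * k ^ 4 * (2 * k ^ 2 + 6 * n * k + 5 * n ^ 2)

theorem fourthPowerCert_succ_sub (n k : ℕ) :
    fourthPowerCert n (k + 1) - fourthPowerCert n k = (n : ℤ) ^ 4 *
      (2 * (2 * n + 1) * (((n + 1).multichoose k : ℤ) ^ 4 * (2 * k + (n + 1 : ℕ))) +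
        n * ((n.multichoose k : ℤ) ^ 4 * (2 * k + n))) := by
  have hright : ((k : ℤ) + 1) ^ 4 * (n.multichoose (k + 1) : ℤ) ^ 4 =
      (n + k) ^ 4 * (n.multichoose k : ℤ) ^ 4 := by
    simp only [← mul_pow]
    exact_mod_cast congrArg (· ^ 4) (succ_mul_multichoose_succ_right n k)
  have hleft : (n : ℤ) ^ 4 * ((n + 1).multichoose k : ℤ) ^ 4 =
      (n + k) ^ 4 * (n.multichoose k : ℤ) ^ 4 := by
    simp only [← mul_pow]
    exact_mod_cast congrArg (· ^ 4) (mul_multichoose_succ_left n k)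
  simp only [fourthPowerCert]
  push_cast
  linear_combination (2 * ((k : ℤ) + 1) ^ 2 + 6 * n * (k + 1) + 5 * n ^ 2) * hright -
    2 * (2 * (n : ℤ) + 1) * (2 * k + n + 1) * hleft

theorem pow_mul_fourthPowerSum_succ_add (n K : ℕ) :
    (n : ℤ) ^ 4 * (2 * (2 * n + 1) * fourthPowerSum (n + 1) K + n * fourthPowerSum n K) =
      fourthPowerCert n K := by
  have htelescope := sum_range_sub (fourthPowerCert n) K
  simp only [fourthPowerCert_succ_sub, ← mul_sum, sum_add_distrib] at htelescope
  refine htelescope.trans ?_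
  simp [fourthPowerCert]

theorem fourthPowerSum_succ_add (n : ℕ) :
    16 * (2 * (2 * (n : ℤ) + 1) * fourthPowerSum (n + 1) (n + 1) + n * fourthPowerSum n n) =
      (n.centralBinom : ℤ) ^ 4 * (205 * (n : ℤ) ^ 2 + 160 * n + 32) := by
  rcases eq_or_ne n 0 with rfl | hn
  · simp [fourthPowerSum]
  have hboundary : 2 * (2 * (n : ℤ) + 1) * fourthPowerSum (n + 1) n + n * fourthPowerSum n n =
      13 * (n : ℤ) ^ 2 * (n.multichoose n : ℤ) ^ 4 := by
    refine mul_left_cancel₀ (pow_ne_zero 4 (Nat.cast_ne_zero.2 hn)) ?_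
    rw [pow_mul_fourthPowerSum_succ_add, fourthPowerCert]
    ring
  have hextra : fourthPowerSum (n + 1) (n + 1) =
      fourthPowerSum (n + 1) n + (n.centralBinom : ℤ) ^ 4 * (3 * n + 1) := by
    rw [fourthPowerSum, sum_range_succ, ← fourthPowerSum, multichoose_succ_self]
    push_cast
    ring
  have hcentral : (n.centralBinom : ℤ) = 2 * n.multichoose n := by
    exact_mod_cast (two_mul_multichoose_self hn).symm
  rw [hextra, hcentral]
  linear_combination 16 * hboundary

/-- The partial sum `∑_{j<K} (-1)^j C(2n-1,j) C(n+j-1,j)²`, which at `K = n` is the sum of the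
second formula up to sign and the reflection `j = n - 1 - k`. -/
def alternatingSum (n K : ℕ) : ℤ :=
  ∑ j ∈ range K, (-1) ^ j * ((2 * n - 1).choose j : ℤ) * (n.multichoose j : ℤ) ^ 2

/-- The Wilf–Zeilberger certificate for `alternatingSum`, scaled by `2n²(2n+1)` to be integral. -/
def alternatingCert (n j : ℕ) : ℤ :=
  -(-1) ^ j * ((2 * n + 1).choose j : ℤ) * (n.multichoose j : ℤ) ^ 2 * j ^ 3 *
    ((21 * n + 8) * j + 30 * n ^ 2 + 11 * n)

theorem alternatingCert_succ_sub (n j : ℕ) :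
    alternatingCert n (j + 1) - alternatingCert n j = 2 * (n : ℤ) ^ 2 * (2 * n + 1) *
      (4 * (2 * n + 1) ^ 2 *
          ((-1) ^ j * ((2 * n + 1).choose j : ℤ) * ((n + 1).multichoose j : ℤ) ^ 2) -
        n ^ 2 * ((-1) ^ j * ((2 * n - 1).choose j : ℤ) * (n.multichoose j : ℤ) ^ 2)) := by
  have hright : ((j : ℤ) + 1) ^ 2 * (n.multichoose (j + 1) : ℤ) ^ 2 =
      (n + j) ^ 2 * (n.multichoose j : ℤ) ^ 2 := by
    simp only [← mul_pow]
    exact_mod_cast congrArg (· ^ 2) (succ_mul_multichoose_succ_right n j)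
  have hleft : (n : ℤ) ^ 2 * ((n + 1).multichoose j : ℤ) ^ 2 =
      (n + j) ^ 2 * (n.multichoose j : ℤ) ^ 2 := by
    simp only [← mul_pow]
    exact_mod_cast congrArg (· ^ 2) (mul_multichoose_succ_left n j)
  have hlower : ((j : ℤ) + 1) * (2 * n + 1).choose (j + 1) =
      (2 * n + 1 - j) * (2 * n + 1).choose j := by
    exact_mod_cast cast_succ_mul_choose_succ (R := ℤ) (2 * n + 1) j
  have hupper : (2 * (n : ℤ) + 1) * (2 * n) * (2 * n - 1).choose j =
      (2 * n + 1 - j) * (2 * n - j) * (2 * n + 1).choose j := by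
    exact_mod_cast cast_succ_mul_mul_choose_sub_one (R := ℤ) (2 * n) j
  have hnext : ((j : ℤ) + 1) ^ 3 * (2 * n + 1).choose (j + 1) * (n.multichoose (j + 1) : ℤ) ^ 2 =
      (2 * n + 1 - j) * (2 * n + 1).choose j * ((n + j) ^ 2 * (n.multichoose j : ℤ) ^ 2) := by
    linear_combination ((j : ℤ) + 1) * (2 * n + 1).choose (j + 1) * hright +
      (n + j) ^ 2 * (n.multichoose j : ℤ) ^ 2 * hlower
  simp only [alternatingCert, pow_succ (-1 : ℤ) j]
  push_cast
  linear_combination (-1) ^ j * ((21 * (n : ℤ) + 8) * (j + 1) + 30 * n ^ 2 + 11 * n) * hnext -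
    (-1) ^ j * (8 * (2 * (n : ℤ) + 1) ^ 3 * (2 * n + 1).choose j) * hleft +
    (-1) ^ j * (n : ℤ) ^ 3 * (n.multichoose j : ℤ) ^ 2 * hupper

theorem mul_alternatingSum_succ_sub (n K : ℕ) :
    2 * (n : ℤ) ^ 2 * (2 * n + 1) *
        (4 * (2 * n + 1) ^ 2 * alternatingSum (n + 1) K - n ^ 2 * alternatingSum n K) =
      alternatingCert n K := by
  have htelescope := sum_range_sub (alternatingCert n) K
  simp only [alternatingCert_succ_sub, ← mul_sum, sum_sub_distrib] at htelescope
  refine htelescope.trans ?_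
  simp [alternatingCert]

theorem alternatingSum_succ_sub (n : ℕ) :
    8 * (-1) ^ n * (4 * (2 * (n : ℤ) + 1) ^ 2 * alternatingSum (n + 1) (n + 1) -
        n ^ 2 * alternatingSum n n) =
      (n.centralBinom : ℤ) ^ 3 * (205 * (n : ℤ) ^ 2 + 160 * n + 32) := by
  rcases eq_or_ne n 0 with rfl | hn
  · simp [alternatingSum]
  have hmiddle : ((n : ℤ) + 1) * (2 * n + 1).choose n = (2 * n + 1) * n.centralBinom := by
    exact_mod_cast succ_mul_choose_two_mul_add_one n
  have hcentral : (n.centralBinom : ℤ) = 2 * n.multichoose n := by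
    exact_mod_cast (two_mul_multichoose_self hn).symm
  have hboundary : 8 * ((n : ℤ) + 1) *
      (4 * (2 * n + 1) ^ 2 * alternatingSum (n + 1) n - n ^ 2 * alternatingSum n n) =
      -(-1) ^ n * (n.centralBinom : ℤ) ^ 3 * n ^ 2 * (51 * n + 19) := by
    have hcert := mul_alternatingSum_succ_sub n n
    have hscale : (n : ℤ) ^ 2 * (2 * n + 1) ≠ 0 := by positivity
    rw [alternatingCert] at hcert
    refine mul_left_cancel₀ hscale ?_
    rw [hcentral] at hmiddle ⊢
    linear_combination 4 * ((n : ℤ) + 1) * hcert -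
      4 * (-1) ^ n * (n.multichoose n : ℤ) ^ 2 * n ^ 4 * (51 * n + 19) * hmiddle
  have hextra : alternatingSum (n + 1) (n + 1) = alternatingSum (n + 1) n +
      (-1) ^ n * (2 * n + 1).choose n * (n.centralBinom : ℤ) ^ 2 := by
    rw [alternatingSum, sum_range_succ, ← alternatingSum, multichoose_succ_self]
    rfl
  have hsign : ((-1 : ℤ) ^ n) ^ 2 = 1 := by rw [pow_right_comm, neg_one_sq, one_pow]
  refine mul_left_cancel₀ (show (n : ℤ) + 1 ≠ 0 by lia) ?_
  rw [hextra]
  linear_combination (-1) ^ n * hboundary +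
    32 * ((-1) ^ n) ^ 2 * (2 * (n : ℤ) + 1) ^ 2 * (n.centralBinom : ℤ) ^ 2 * hmiddle +
    ((n : ℤ) + 1) * (n.centralBinom : ℤ) ^ 3 * (205 * n ^ 2 + 160 * n + 32) * hsign

theorem A_eq_fourthPowerSum (n : ℕ) :
    A n = 16 * n * n.centralBinom * fourthPowerSum n n := by
  refine A_eq_of_succ_add_eq (f := fun n => 16 * n * n.centralBinom * fourthPowerSum n n)
    (by simp) (fun n => ?_) n
  have hcentral : ((n : ℤ) + 1) * (n + 1).centralBinom = 2 * (2 * n + 1) * n.centralBinom := by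
    exact_mod_cast n.succ_mul_centralBinom_succ
  push_cast
  linear_combination 16 * fourthPowerSum (n + 1) (n + 1) * hcentral +
    (n.centralBinom : ℤ) * fourthPowerSum_succ_add n

theorem A_eq_alternatingSum (n : ℕ) :
    A n = 8 * (n : ℤ) ^ 2 * (n.centralBinom : ℤ) ^ 2 * ((-1) ^ (n + 1) * alternatingSum n n) := by
  refine A_eq_of_succ_add_eq (f := fun n =>
    8 * (n : ℤ) ^ 2 * (n.centralBinom : ℤ) ^ 2 * ((-1) ^ (n + 1) * alternatingSum n n))
    (by simp) (fun n => ?_) n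
  have hcentral : ((n : ℤ) + 1) ^ 2 * ((n + 1).centralBinom : ℤ) ^ 2 =
      (2 * (2 * n + 1)) ^ 2 * (n.centralBinom : ℤ) ^ 2 := by
    simp only [← mul_pow]
    exact_mod_cast congrArg (· ^ 2) n.succ_mul_centralBinom_succ
  push_cast
  linear_combination 8 * (-1) ^ n * alternatingSum (n + 1) (n + 1) * hcentral +
    (n.centralBinom : ℤ) ^ 2 * alternatingSum_succ_sub n

theorem neg_one_pow_mul_alternatingSum (n : ℕ) :
    (-1) ^ (n + 1) * alternatingSum n n =
      ∑ k ∈ range n, (-1) ^ k * ((2 * n - 1).choose (n + k) : ℤ) *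
        ((2 * n - k - 2).choose (n - k - 1) : ℤ) ^ 2 := by
  rw [alternatingSum, ← sum_range_reflect, mul_sum]
  refine sum_congr rfl fun k hk => ?_
  obtain ⟨j, rfl⟩ := Nat.exists_eq_add_of_lt (mem_range.1 hk)
  have hj : k + j + 1 - 1 - k = j := by lia
  have hj' : k + j + 1 - k - 1 = j := by lia
  have hsymm : (2 * (k + j + 1) - 1).choose (k + j + 1 + k) = (2 * (k + j + 1) - 1).choose j :=
    Nat.choose_symm_of_eq_add (by lia)
  have hmulti : (2 * (k + j + 1) - k - 2).choose j = (k + j + 1).multichoose j := by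
    rw [Nat.multichoose_eq]
    congr 1
    lia
  have hsign : (-1 : ℤ) ^ (k + j + 1 + 1) * (-1) ^ j = (-1) ^ k := by
    rw [← pow_add, show k + j + 1 + 1 + j = k + 2 * (j + 1) by ring, pow_add, pow_mul]
    simp
  rw [hj, hj', hsymm, hmulti, ← hsign]
  ring

theorem stmt16 (n : ℕ) (hn : 0 < n) :
    (A n = 16 * n * (Nat.choose (2 * n) n : ℤ) *
        ∑ k ∈ Finset.range n, (Nat.choose (n + k - 1) k : ℤ) ^ 4 * (2 * k + n)) ∧
    (A n = 8 * (n : ℤ) ^ 2 * (Nat.choose (2 * n) n : ℤ) ^ 2 *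
        ∑ k ∈ Finset.range n,
          (-1) ^ k * (Nat.choose (2 * n - 1) (n + k) : ℤ) *
            (Nat.choose (2 * n - k - 2) (n - k - 1) : ℤ) ^ 2) := by
  rw [← Nat.centralBinom_eq_two_mul_choose]
  constructor
  · simp only [A_eq_fourthPowerSum, fourthPowerSum, Nat.multichoose_eq]
  · rw [A_eq_alternatingSum, neg_one_pow_mul_alternatingSum]
end

section
/- For every positive integer n, the integer A_n = ∑_{k=0}^{n−1} (−1)^{n−1−k} C(2k, k)^5 (205k² + 160k + 32) is divisible by 8n² C(2n, n)², and the quotient a_n = A_n / (8n² C(2n, n)²) is a positive integer. -/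
section AltSum

variable {R : Type*} [Ring R]

/-- The alternating sum `u (n-1) - u (n-2) + ⋯ ± u 0` of the first `n` terms of `u`, with signs
normalised so that the last term is counted positively. -/
def altSum (u : ℕ → R) (n : ℕ) : R :=
  ∑ k ∈ Finset.range n, (-1) ^ (n - 1 - k) * u k

@[simp]
lemma altSum_zero (u : ℕ → R) : altSum u 0 = 0 := by
  simp [altSum]

lemma altSum_succ (u : ℕ → R) (n : ℕ) : altSum u (n + 1) = u n - altSum u n := by
  have sign_flip : ∀ k ∈ Finset.range n,
      (-1) ^ (n + 1 - 1 - k) * u k = -((-1) ^ (n - 1 - k) * u k) := fun k hk => by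
    rw [show n + 1 - 1 - k = n - 1 - k + 1 by grind, pow_succ]
    simp
  rw [altSum, Finset.sum_range_succ, Finset.sum_congr rfl sign_flip, Finset.sum_neg_distrib, altSum]
  simp [sub_eq_neg_add]

lemma altSum_succ_mem_Ioc [PartialOrder R] [IsOrderedAddMonoid R] {u : ℕ → R} {n : ℕ}
    (h0 : 0 < u 0) (hu : ∀ k < n, u k < u (k + 1)) : altSum u (n + 1) ∈ Set.Ioc 0 (u n) := by
  induction n with
  | zero => simpa [altSum_succ] using h0
  | succ n ih =>
    obtain ⟨hpos, hle⟩ := ih fun k hk => hu k (hk.trans n.lt_succ_self)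
    rw [altSum_succ u (n + 1)]
    exact ⟨sub_pos.2 (hle.trans_lt (hu n n.lt_succ_self)), sub_le_self _ hpos.le⟩

end AltSum

lemma succ_mul_cast_choose_succ (a k : ℕ) :
    ((k : ℤ) + 1) * a.choose (k + 1) = (a - k) * a.choose k := by
  rcases le_or_gt k a with hk | hk
  · have := a.choose_succ_right_eq k
    zify [hk] at this
    linear_combination this
  · simp [Nat.choose_eq_zero_of_lt hk, Nat.choose_eq_zero_of_lt (hk.trans k.lt_succ_self)]

lemma succ_mul_cast_choose_succ_succ (a k : ℕ) :
    ((k : ℤ) + 1) * (a + 1).choose (k + 1) = (a + 1) * a.choose k := by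
  exact_mod_cast (mul_comm _ _).trans (a.add_one_mul_choose_eq k).symm

lemma two_mul_choose_eq_centralBinom_succ (m : ℕ) :
    2 * (2 * m + 1).choose (m + 1) = (m + 1).centralBinom := by
  rw [two_mul, Nat.centralBinom, mul_add_one, Nat.choose_succ_succ' (2 * m + 1) m,
    Nat.choose_symm_half]

/-- The product `C(a, k) C(b + k, k)^2`; with `a = 2m + 1` and `b = m` it is the absolute value of
the `k`-th term of the alternating sum for the quotient `a_{m+1}`. -/
def binomTerm (a b k : ℕ) : ℤ := a.choose k * (b + k).choose k ^ 2

@[simp]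
lemma binomTerm_zero_right (a b : ℕ) : binomTerm a b 0 = 1 := by
  simp [binomTerm]

lemma binomTerm_lt_succ {a b k : ℕ} (hk : k < a / 2) (hb : 0 < b) :
    binomTerm a b k < binomTerm a b (k + 1) := by
  have choose_le : a.choose k ≤ a.choose (k + 1) := Nat.choose_le_succ_of_lt_half_left hk
  have choose_lt : (b + k).choose k < (b + (k + 1)).choose (k + 1) := by
    rw [← add_assoc, Nat.choose_succ_succ']
    exact Nat.lt_add_of_pos_right (Nat.choose_pos (by lia))
  have choose_pos : 0 < a.choose (k + 1) := Nat.choose_pos (by lia)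
  unfold binomTerm
  exact_mod_cast Nat.mul_lt_mul_of_le_of_lt choose_le
    (Nat.pow_lt_pow_left choose_lt two_ne_zero) choose_pos

lemma binomTerm_succ_right (a b k : ℕ) :
    ((k : ℤ) + 1) ^ 3 * binomTerm a b (k + 1) = (a - k) * (b + k + 1) ^ 2 * binomTerm a b k := by
  have hb := succ_mul_cast_choose_succ_succ (b + k) k
  push_cast at hb
  calc
    _ = (((k : ℤ) + 1) * a.choose (k + 1)) * ((k + 1) * (b + k + 1).choose (k + 1)) ^ 2 := by
      rw [binomTerm, ← add_assoc]; ring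
    _ = _ := by rw [succ_mul_cast_choose_succ, hb, binomTerm]; ring

lemma binomTerm_succ_left_succ_right (a b k : ℕ) :
    ((k : ℤ) + 1) ^ 3 * binomTerm (a + 1) b (k + 1)
      = (a + 1) * (b + k + 1) ^ 2 * binomTerm a b k := by
  have hb := succ_mul_cast_choose_succ_succ (b + k) k
  push_cast at hb
  calc
    _ = (((k : ℤ) + 1) * (a + 1).choose (k + 1)) * ((k + 1) * (b + k + 1).choose (k + 1)) ^ 2 := by
      rw [binomTerm, ← add_assoc]; ring
    _ = _ := by rw [succ_mul_cast_choose_succ_succ, hb, binomTerm]; ring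

lemma binomTerm_succ_right_eq_succ_succ (a b k : ℕ) :
    ((a : ℤ) + 1) * (k + 1) ^ 3 * binomTerm a b (k + 1)
      = (a - k) * (a + 1 - k) * (b + 1) ^ 2 * binomTerm (a + 1) (b + 1) k := by
  have ha : ((a : ℤ) + 1) * a.choose k = (a + 1 - k) * (a + 1).choose k := by
    rw [← succ_mul_cast_choose_succ_succ, succ_mul_cast_choose_succ, Nat.cast_succ]
  have hb := succ_mul_cast_choose_succ (b + 1 + k) k
  push_cast [add_sub_cancel_right] at hb
  calc
    _ = (a + 1) * (((k : ℤ) + 1) * a.choose (k + 1)) *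
          ((k + 1) * (b + 1 + k).choose (k + 1)) ^ 2 := by
      rw [binomTerm, add_right_comm b 1 k, ← add_assoc]; ring
    _ = (a - k) * ((a + 1) * a.choose k) * ((b + 1) * (b + 1 + k).choose k) ^ 2 := by
      rw [succ_mul_cast_choose_succ, hb]; ring
    _ = _ := by rw [ha, binomTerm]; ring

/-- The hypergeometric term `G(m, k)` found by Zeilberger's algorithm, through which the
alternating sums of `binomTerm (2m+1) m` telescope. As a rational multiple of
`binomTerm (2m+1) m k` it would have a denominator; in this form it is visibly an integer. -/
def zeilbergerCert (m k : ℕ) : ℤ :=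
  ((30 * m + 41) * (m + 1) + (21 * m + 29) * (k + 1)) * binomTerm (2 * m + 2) (m + 1) k

lemma zeilbergerCert_succ_add (m k : ℕ) :
    zeilbergerCert m (k + 1) + zeilbergerCert m k
      = 2 * (4 * (2 * m + 3) ^ 2 * binomTerm (2 * m + 3) (m + 1) (k + 1)
          - (m + 1) ^ 2 * binomTerm (2 * m + 1) m (k + 1)) := by
  have hcert := binomTerm_succ_right (2 * m + 2) (m + 1) k
  have hnext := binomTerm_succ_left_succ_right (2 * m + 2) (m + 1) k
  have hcurr := binomTerm_succ_right_eq_succ_succ (2 * m + 1) m k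
  have hk : ((k : ℤ) + 1) ^ 3 ≠ 0 := by positivity
  unfold zeilbergerCert
  push_cast at hcert hnext hcurr ⊢
  -- After scaling by `(k+1)³` every term is a polynomial multiple of `C(2m+2,k) C(m+1+k,k)²`.
  apply mul_left_cancel₀ hk
  linear_combination ((30 * (m : ℤ) + 41) * (m + 1) + (21 * m + 29) * (k + 2)) * hcert
    - 8 * (2 * (m : ℤ) + 3) ^ 2 * hnext + ((m : ℤ) + 1) * hcurr

lemma altSum_binomTerm_telescope (m k : ℕ) :
    2 * (4 * (2 * m + 3) ^ 2 * altSum (binomTerm (2 * m + 3) (m + 1)) (k + 1)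
        - (m + 1) ^ 2 * altSum (binomTerm (2 * m + 1) m) (k + 1))
      = zeilbergerCert m k := by
  induction k with
  | zero =>
    simp only [altSum_succ, altSum_zero, binomTerm_zero_right, zeilbergerCert, Nat.cast_zero]
    ring
  | succ k ih =>
    rw [altSum_succ _ (k + 1), altSum_succ _ (k + 1)]
    linear_combination -ih - zeilbergerCert_succ_add m k

/-- The quotient `a_{m+1} = A_{m+1} / (8 (m+1)² C(2m+2, m+1)²)`, defined by its closed form
`∑_{k=0}^{m} (-1)^{m-k} C(2m+1, k) C(m+k, k)²`. -/
def reducedA (m : ℕ) : ℤ := altSum (binomTerm (2 * m + 1) m) (m + 1)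

lemma reducedA_pos (m : ℕ) : 0 < reducedA m := by
  refine (altSum_succ_mem_Ioc (by simp) fun k hk => ?_).1
  exact binomTerm_lt_succ (by lia) (by lia)

lemma reducedA_recurrence (m : ℕ) :
    8 * (4 * (2 * m + 3) ^ 2 * reducedA (m + 1) + (m + 1) ^ 2 * reducedA m)
      = ((m + 1).centralBinom : ℤ) ^ 3 * (205 * (m + 1) ^ 2 + 160 * (m + 1) + 32) := by
  have htele := altSum_binomTerm_telescope m (m + 1)
  have hcert : binomTerm (2 * m + 2) (m + 1) (m + 1) = ((m + 1).centralBinom : ℤ) ^ 3 := by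
    rw [binomTerm, ← two_mul, Nat.centralBinom, mul_add_one]
    ring
  have hextra : 8 * binomTerm (2 * m + 1) m (m + 1) = ((m + 1).centralBinom : ℤ) ^ 3 := by
    rw [binomTerm, ← two_mul_choose_eq_centralBinom_succ, ← add_assoc, ← two_mul]
    push_cast
    ring
  rw [altSum_succ (binomTerm (2 * m + 1) m), ← reducedA, zeilbergerCert, hcert] at htele
  rw [reducedA, mul_add_one 2 m]
  push_cast at htele ⊢
  linear_combination 4 * htele + ((m : ℤ) + 1) ^ 2 * hextra

lemma A_eq_altSum (n : ℕ) :
    A n = altSum (fun k => (k.centralBinom : ℤ) ^ 5 * (205 * k ^ 2 + 160 * k + 32)) n := by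
  simp only [A, altSum, Nat.centralBinom, mul_assoc]

lemma A_succ (n : ℕ) :
    A (n + 1) = (n.centralBinom : ℤ) ^ 5 * (205 * n ^ 2 + 160 * n + 32) - A n := by
  simp only [A_eq_altSum, altSum_succ]

lemma A_succ_eq_mul_reducedA (m : ℕ) :
    A (m + 1) = 8 * (m + 1) ^ 2 * ((m + 1).centralBinom : ℤ) ^ 2 * reducedA m := by
  induction m with
  | zero => decide
  | succ m ih =>
    have hbinom : ((m : ℤ) + 2) * (m + 2).centralBinom
        = 2 * (2 * m + 3) * (m + 1).centralBinom := by
      have := Nat.succ_mul_centralBinom_succ (m + 1)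
      zify at this
      linear_combination this
    rw [A_succ, ih]
    push_cast
    calc
      _ = ((m + 1).centralBinom : ℤ) ^ 2 *
            (((m + 1).centralBinom : ℤ) ^ 3 * (205 * (m + 1) ^ 2 + 160 * (m + 1) + 32)
              - 8 * (m + 1) ^ 2 * reducedA m) := by ring
      _ = 8 * (2 * (2 * m + 3) * ((m + 1).centralBinom : ℤ)) ^ 2 * reducedA (m + 1) := by
        rw [← reducedA_recurrence]; ring
      _ = _ := by rw [← hbinom]; ring

theorem stmt17 (n : ℕ) (hn : 0 < n) :
    ∃ a : ℤ, 0 < a ∧ A n = 8 * (n : ℤ) ^ 2 * (Nat.choose (2 * n) n : ℤ) ^ 2 * a := by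
  obtain ⟨m, rfl⟩ := Nat.exists_eq_add_one.2 hn
  exact ⟨reducedA m, reducedA_pos m, mod_cast A_succ_eq_mul_reducedA m⟩
end

section
/- Let p be a prime greater than 3, and let ε = 1 if p ≡ 1 (mod 3) and ε = −1 if p ≡ 2 (mod 3) (the Legendre symbol (p/3)). Then the rational number ∑_{k=0}^{p−1} (15k + 4) C(2k, k)² C(3k, k) / (−27)^k − 4εp has p-adic valuation at least 2; equivalently, ∑_{k=0}^{p−1} (15k + 4) C(2k, k)² C(3k, k) / (−27)^k ≡ 4 (p/3) p (mod p²). -/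
/-!
The summand is deformed by a parameter `q`, on which it depends through `q²` only (`wzTerm q 0 n`).
The deformation belongs to a WZ pair `T(n, k)` (`wzTerm`), `M(n, k)` (`wzMate`), where
`M(n, k) = A(n) (n + 2k) ∏_b (b + k)_n` is the well-poised term behind the acceleration of Dougall's
`₅F₄` sum, with `b` running over `(1 ± q) / 3` and `(2 ± q) / 3`. Thus
`∑_{n ≤ L} T(n, k + 1) - ∑_{n ≤ L} T(n, k) = 18 M(L, k + 1)`. If `q` is a natural number prime to
`3` and `N = ⌊q / 3⌋ ≤ L`, then `M(L, k) = 0` for `1 ≤ k ≤ N`, so that `∑ T(n, 0) = ∑ T(n, N)`. In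
the latter sum only the term `n = 0` survives, which gives the closed form `2 (q/3) q`.

For `n < p`, apart from the factor `(-3)ⁿ (2n)! / (n! (3n+1)!)`, whose `p`-adic valuation is at
least `-1`, the summand is a `p`-integral rational function of `v = q²`. Modulo `p⁴` it is affine in
`v` on multiples of `p²`, and extrapolating from `v = p², 4p²` to `v = 0` expresses three times the
undeformed summand as four times the summand at `q = p` minus the summand at `q = 2p`, modulo `p³`.
Summing over `n < p` yields `4 · 2 (p/3) p - 2 (2p/3) (2p) = 12 (p/3) p`, because
`(2p/3) = -(p/3)`.
-/

open Finset Polynomial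
open scoped Nat

section WZPair

variable {R : Type*} [CommRing R] {K : Type*} [Field K]

/-- The product `81 ∏_b (j + b)` over `b = (1 ± q) / 3, (2 ± q) / 3`: one step of the four
Pochhammer symbols in the numerator of the WZ pair. -/
def quarticFactor (q j : R) : R := ((3 * j + 1) ^ 2 - q ^ 2) * ((3 * j + 2) ^ 2 - q ^ 2)

/-- The numerator `81ⁿ ∏_b (k + b)_n` of the WZ pair, with `b` as in `quarticFactor`. -/
def numProd (q k : R) (n : ℕ) : R := ∏ i ∈ range n, quarticFactor q (k + i)

/-- The part of the denominator of the WZ pair that depends on `q`, namely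
`9ⁿ (1 - 2q/3)_n (1 + 2q/3)_n`. -/
def denProd (q : R) (n : ℕ) : R := ∏ i ∈ range n, ((3 * ((i : R) + 1)) ^ 2 - (2 * q) ^ 2)

variable (K) in
/-- The factor of the WZ pair that depends on `n` alone. -/
def wzCoeff (n : ℕ) : K := (-3) ^ n * (2 * n)! / (n ! * (3 * n + 1)!)

/-- The summand deformed by `q`, with WZ parameter `k`; the original summand is the case
`q = k = 0`. -/
def wzTerm (q k : K) (n : ℕ) : K :=
  wzCoeff K n * (numProd q k n / denProd q n) *
    (18 * k ^ 2 + 18 * (3 * n + 1) * k + 45 * n ^ 2 + 27 * n + 4 - 2 * q ^ 2)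

/-- The WZ mate of `wzTerm`: up to the factor `18`, its difference in `n` is the difference of
`wzTerm` in `k`. -/
def wzMate (q k : K) (n : ℕ) : K :=
  wzCoeff K n * (numProd q k n / denProd q n) * ((2 * n + 1) * (n + 2 * k))

lemma numProd_succ (q k : R) (n : ℕ) :
    numProd q k (n + 1) = numProd q k n * quarticFactor q (k + n) :=
  prod_range_succ _ _

lemma numProd_succ' (q k : R) (n : ℕ) :
    numProd q k (n + 1) = quarticFactor q k * numProd q (k + 1) n := by
  simp only [numProd, prod_range_succ', Nat.cast_add, Nat.cast_one, Nat.cast_zero, add_zero,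
    add_assoc, add_comm (1 : R)]
  exact mul_comm _ _

lemma numProd_eq_zero {q k : R} {n i : ℕ} (hi : i < n) (h : quarticFactor q (k + i) = 0) :
    numProd q k n = 0 :=
  prod_eq_zero (mem_range.2 hi) h

lemma denProd_succ (q : R) (n : ℕ) :
    denProd q (n + 1) = denProd q n * ((3 * ((n : R) + 1)) ^ 2 - (2 * q) ^ 2) :=
  prod_range_succ _ _

lemma denProd_zero (n : ℕ) : denProd (0 : R) n = (3 ^ n * n !) ^ 2 := by
  induction n with
  | zero => simp [denProd]
  | succ n ih => rw [denProd_succ, ih, Nat.factorial_succ]; push_cast; ring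

lemma numProd_zero_mul (n : ℕ) : numProd (0 : R) 0 n * (3 ^ n * n !) ^ 2 = ((3 * n)! : R) ^ 2 := by
  induction n with
  | zero => simp [numProd]
  | succ n ih =>
    have hfact : (3 * (n + 1))! = (3 * n + 3) * ((3 * n + 2) * ((3 * n + 1) * (3 * n)!)) := rfl
    calc numProd (0 : R) 0 (n + 1) * (3 ^ (n + 1) * (n + 1)!) ^ 2
        = numProd 0 0 n * (3 ^ n * n !) ^ 2 *
            ((3 * n + 3) * ((3 * n + 2) * (3 * n + 1))) ^ 2 := by
          rw [numProd_succ, Nat.factorial_succ, quarticFactor]; push_cast; ring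
      _ = ((3 * (n + 1))! : R) ^ 2 := by rw [ih, hfact]; push_cast; ring

lemma wzTerm_zero_right (q k : K) : wzTerm q k 0 = 18 * k ^ 2 + 18 * k + 4 - 2 * q ^ 2 := by
  simp [wzTerm, wzCoeff, numProd, denProd]

lemma wzTerm_eq_zero {q k : K} {n : ℕ} (hn : 0 < n) (h : quarticFactor q k = 0) :
    wzTerm q k n = 0 := by
  simp [wzTerm, numProd_eq_zero hn (by simpa using h)]

lemma wzMate_eq_zero {q k : K} {n i : ℕ} (hi : i < n) (h : quarticFactor q (k + i) = 0) :
    wzMate q k n = 0 := by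
  simp [wzMate, numProd_eq_zero hi h]

lemma denProd_ne_zero {q : K} (hq : ∀ i : ℕ, (3 * ((i : K) + 1)) ^ 2 ≠ (2 * q) ^ 2) (n : ℕ) :
    denProd q n ≠ 0 :=
  prod_ne_zero_iff.2 fun i _ => sub_ne_zero.2 (hq i)

variable [CharZero K]

lemma wzCoeff_succ_mul (n : ℕ) :
    wzCoeff K (n + 1) * ((n + 1) * (3 * n + 2) * (3 * n + 4)) =
      -2 * (2 * n + 1) * wzCoeff K n := by
  have hnum : (2 * (n + 1))! = (2 * n + 2) * ((2 * n + 1) * (2 * n)!) := rfl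
  have hden : (3 * (n + 1) + 1)! =
    (3 * n + 4) * ((3 * (n + 1)) * ((3 * n + 2) * (3 * n + 1)!)) := rfl
  have h2 : (3 * n + 2 : K) ≠ 0 := by exact_mod_cast (3 * n + 1).succ_ne_zero
  have h4 : (3 * n + 4 : K) ≠ 0 := by exact_mod_cast (3 * n + 3).succ_ne_zero
  have h1 : (n + 1 : K) ≠ 0 := n.cast_add_one_ne_zero
  have hn : (n ! : K) ≠ 0 := mod_cast n.factorial_ne_zero
  have hn' : ((3 * n + 1)! : K) ≠ 0 := mod_cast (3 * n + 1).factorial_ne_zero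
  rw [wzCoeff, wzCoeff, hnum, hden, Nat.factorial_succ n]
  push_cast
  field_simp
  ring

/-- The original summand is recovered at `q = k = 0`, where the quadratic factor splits as
`(3n + 1) (15n + 4)`. -/
lemma wzTerm_zero_zero (n : ℕ) :
    wzTerm (0 : K) 0 n =
      (15 * n + 4) * ((2 * n).choose n : K) ^ 2 * ((3 * n).choose n : K) / (-27) ^ n := by
  have hchoose₂ : ((2 * n).choose n : K) = (2 * n)! / (n ! * n !) := by
    rw [Nat.cast_choose K (by omega), show 2 * n - n = n by omega]
  have hchoose₃ : ((3 * n).choose n : K) = (3 * n)! / (n ! * (2 * n)!) := by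
    rw [Nat.cast_choose K (by omega), show 3 * n - n = 2 * n by omega]
  have hn : (n ! : K) ≠ 0 := mod_cast n.factorial_ne_zero
  have h2n : ((2 * n)! : K) ≠ 0 := mod_cast (2 * n).factorial_ne_zero
  have h3n : ((3 * n)! : K) ≠ 0 := mod_cast (3 * n).factorial_ne_zero
  have h3n1 : (3 * n + 1 : K) ≠ 0 := by exact_mod_cast (3 * n).succ_ne_zero
  have hnum : numProd (0 : K) 0 n = ((3 * n)! / (3 ^ n * n !)) ^ 2 := by
    rw [div_pow, eq_div_iff (by simp [hn]), numProd_zero_mul]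
  have hpow : (-27 : K) ^ n = (-3) ^ n * 3 ^ n * 3 ^ n := by
    rw [← mul_pow, ← mul_pow]; norm_num
  have hsign : ((-3 : K) ^ n) ^ 2 = (3 ^ n) ^ 2 := by
    rw [← pow_mul, ← pow_mul, mul_comm n, pow_mul, pow_mul]; norm_num
  rw [wzTerm, wzCoeff, hnum, denProd_zero, hchoose₂, hchoose₃, hpow, Nat.factorial_succ]
  push_cast
  field_simp
  linear_combination (3 * n + 1) * (15 * n + 4) * hsign

lemma wzTerm_add_one_sub_wzTerm {q : K} (hq : ∀ i : ℕ, (3 * ((i : K) + 1)) ^ 2 ≠ (2 * q) ^ 2)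
    (k : K) (n : ℕ) :
    wzTerm q (k + 1) (n + 1) - wzTerm q k (n + 1) =
      18 * (wzMate q (k + 1) (n + 1) - wzMate q (k + 1) n) := by
  have hden := denProd_ne_zero hq n
  have hstep := sub_ne_zero.2 (hq n)
  have hcoeff := wzCoeff_succ_mul (K := K) n
  simp only [wzTerm, wzMate, denProd_succ, numProd_succ' q k, numProd_succ q (k + 1),
    quarticFactor]
  generalize hd : (3 * ((n : K) + 1)) ^ 2 - (2 * q) ^ 2 = d at hstep ⊢
  push_cast
  field_simp
  subst hd
  linear_combination 9 * (n + 2 * (k + 1)) * ((3 * ((n : K) + 1)) ^ 2 - (2 * q) ^ 2) *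
    numProd q (k + 1) n * hcoeff

lemma sum_wzTerm_add_one {q : K} (hq : ∀ i : ℕ, (3 * ((i : K) + 1)) ^ 2 ≠ (2 * q) ^ 2)
    (k : K) (L : ℕ) :
    ∑ n ∈ range (L + 1), wzTerm q (k + 1) n =
      ∑ n ∈ range (L + 1), wzTerm q k n + 18 * wzMate q (k + 1) L := by
  induction L with
  | zero =>
    have hmate : wzMate q (k + 1) 0 = 2 * (k + 1) := by simp [wzMate, wzCoeff, numProd, denProd]
    rw [zero_add, sum_range_one, sum_range_one, wzTerm_zero_right, wzTerm_zero_right, hmate]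
    ring
  | succ L ih =>
    rw [sum_range_succ, sum_range_succ _ (L + 1)]
    linear_combination ih + wzTerm_add_one_sub_wzTerm hq k L

lemma sum_wzTerm_natCast_shift {q : K} (hq : ∀ i : ℕ, (3 * ((i : K) + 1)) ^ 2 ≠ (2 * q) ^ 2)
    {N L : ℕ} (hN : quarticFactor q N = 0) (hL : N ≤ L) {k : ℕ} (hk : k ≤ N) :
    ∑ n ∈ range (L + 1), wzTerm q k n = ∑ n ∈ range (L + 1), wzTerm q 0 n := by
  induction k with
  | zero => simp
  | succ k ih =>
    have hroot : quarticFactor q ((k : K) + 1 + (N - (k + 1) : ℕ)) = 0 := by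
      rw [Nat.cast_sub hk]; push_cast; rwa [add_sub_cancel]
    rw [Nat.cast_add_one, sum_wzTerm_add_one hq, ih (by omega), wzMate_eq_zero (by omega) hroot,
      mul_zero, add_zero]

lemma sum_wzTerm_of_quarticFactor_eq_zero {q : K}
    (hq : ∀ i : ℕ, (3 * ((i : K) + 1)) ^ 2 ≠ (2 * q) ^ 2)
    {N M : ℕ} (hN : quarticFactor q N = 0) (hM : N < M) :
    ∑ n ∈ range M, wzTerm q 0 n = 18 * (N : K) ^ 2 + 18 * N + 4 - 2 * q ^ 2 := by
  obtain ⟨L, rfl⟩ := Nat.exists_eq_add_one_of_ne_zero (Nat.ne_zero_of_lt hM)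
  rw [← sum_wzTerm_natCast_shift hq hN (by omega) le_rfl, sum_range_succ',
    sum_eq_zero fun n _ => wzTerm_eq_zero n.succ_pos hN, zero_add, wzTerm_zero_right]

lemma sq_three_mul_ne_sq_two_mul {q : ℕ} (h3 : ¬ 3 ∣ q) (i : ℕ) :
    (3 * ((i : K) + 1)) ^ 2 ≠ (2 * (q : K)) ^ 2 := by
  intro h
  have hsq : (3 * (i + 1)) ^ 2 = (2 * q) ^ 2 := by exact_mod_cast h
  have := Nat.pow_left_injective two_ne_zero hsq
  omega

lemma sum_wzTerm_natCast {q M : ℕ} (h3 : ¬ 3 ∣ q) (hM : q < 3 * M) :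
    ∑ n ∈ range M, wzTerm (q : K) 0 n = 2 * (if q % 3 = 1 then 1 else -1) * q := by
  have hq := sq_three_mul_ne_sq_two_mul (K := K) h3
  obtain ⟨N, rfl | rfl⟩ : ∃ N, q = 3 * N + 1 ∨ q = 3 * N + 2 := ⟨q / 3, by omega⟩
  · rw [sum_wzTerm_of_quarticFactor_eq_zero hq (N := N) (by simp [quarticFactor]) (by omega),
      if_pos (by omega)]
    push_cast; ring
  · rw [sum_wzTerm_of_quarticFactor_eq_zero hq (N := N) (by simp [quarticFactor]) (by omega),
      if_neg (by omega)]
    push_cast; ring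

end WZPair

section Extrapolation

variable {R : Type*} [CommRing R]

/-- The weights `3, -4, 1` at `0, ε, 4ε` annihilate affine functions, and `f / g` is affine when
`ε² = 0`; here the denominators are cleared. -/
lemma extrapolate_eq_zero_of_sq_eq_zero (f g : R[X]) {ε : R} (hε : ε ^ 2 = 0) :
    3 * f.eval 0 * g.eval ε * g.eval (4 * ε) - 4 * f.eval ε * g.eval 0 * g.eval (4 * ε) +
      f.eval (4 * ε) * g.eval 0 * g.eval ε = 0 := by
  have taylor (h : R[X]) {x : R} (hx : x ^ 2 = 0) :
      h.eval x = h.eval 0 + h.derivative.eval 0 * x := by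
    simpa using h.eval_add_of_sq_eq_zero 0 x hx
  have h4ε : (4 * ε) ^ 2 = 0 := by rw [mul_pow, hε, mul_zero]
  rw [taylor f hε, taylor f h4ε, taylor g hε, taylor g h4ε]
  linear_combination 12 * (f.eval 0 * g.derivative.eval 0 ^ 2 -
    f.derivative.eval 0 * g.eval 0 * g.derivative.eval 0) * hε

lemma sq_dvd_extrapolate (f g : R[X]) (m : R) :
    m ^ 2 ∣ 3 * f.eval 0 * g.eval m * g.eval (4 * m) - 4 * f.eval m * g.eval 0 * g.eval (4 * m) +
      f.eval (4 * m) * g.eval 0 * g.eval m := by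
  let red := Ideal.Quotient.mk (Ideal.span {m ^ 2})
  have hm : red m ^ 2 = 0 := by
    rw [← map_pow]; exact Ideal.Quotient.eq_zero_iff_mem.2 (Ideal.mem_span_singleton_self _)
  rw [← Ideal.mem_span_singleton, ← Ideal.Quotient.eq_zero_iff_mem]
  have h := extrapolate_eq_zero_of_sq_eq_zero (f.map red) (g.map red) hm
  have h4m : 4 * red m = red (4 * m) := by rw [map_mul, map_ofNat]
  rw [h4m] at h
  simp only [eval_zero_map, eval_map_apply] at h
  simpa only [map_add, map_sub, map_mul, map_ofNat] using h

lemma isUnit_eval_of_sub_mem_maximalIdeal [IsLocalRing R] {g : R[X]} {x y : R}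
    (hxy : x - y ∈ IsLocalRing.maximalIdeal R) (hx : IsUnit (g.eval x)) : IsUnit (g.eval y) := by
  by_contra hy
  have hdiff : g.eval x - g.eval y ∈ IsLocalRing.maximalIdeal R :=
    Ideal.mem_of_dvd _ (g.sub_dvd_eval_sub x y) hxy
  exact (IsLocalRing.mem_maximalIdeal _).1 (((Submodule.sub_mem_iff_left _ hy).1 hdiff)) hx

end Extrapolation

section Padic

variable {p : ℕ} [Fact p.Prime]

lemma norm_aeval_eq_one {g : ℤ_[p][X]} (hg : ‖aeval (0 : ℚ_[p]) g‖ = 1) {v : ℚ_[p]}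
    (hv : ‖v‖ < 1) : ‖aeval v g‖ = 1 := by
  obtain ⟨m, rfl⟩ : ∃ m : ℤ_[p], algebraMap ℤ_[p] ℚ_[p] m = v := ⟨⟨v, hv.le⟩, rfl⟩
  rw [← map_zero (algebraMap ℤ_[p] ℚ_[p]), aeval_algebraMap_apply_eq_algebraMap_eval] at hg
  rw [aeval_algebraMap_apply_eq_algebraMap_eval]
  refine PadicInt.isUnit_iff.1 (isUnit_eval_of_sub_mem_maximalIdeal ?_ (PadicInt.isUnit_iff.2 hg))
  rw [zero_sub]
  exact neg_mem (PadicInt.mem_nonunits.2 hv)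

lemma norm_aeval_div_extrapolate_le (f : ℤ_[p][X]) {g : ℤ_[p][X]}
    (hg : ‖aeval (0 : ℚ_[p]) g‖ = 1) {v : ℚ_[p]} (hv : ‖v‖ < 1) :
    ‖3 * (aeval 0 f / aeval 0 g) - 4 * (aeval v f / aeval v g) +
      aeval (4 * v) f / aeval (4 * v) g‖ ≤ ‖v‖ ^ 2 := by
  have h4v : ‖4 * v‖ < 1 := by
    rw [norm_mul]
    exact mul_lt_one_of_nonneg_of_lt_one_right (IsUltrametricDist.norm_natCast_le_one ℚ_[p] 4)
      (norm_nonneg v) hv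
  have hgv := norm_aeval_eq_one hg hv
  have hg4v := norm_aeval_eq_one hg h4v
  have hg_ne := norm_ne_zero_iff.1 (hg.trans_ne one_ne_zero)
  have hgv_ne := norm_ne_zero_iff.1 (hgv.trans_ne one_ne_zero)
  have hg4v_ne := norm_ne_zero_iff.1 (hg4v.trans_ne one_ne_zero)
  obtain ⟨m, rfl⟩ : ∃ m : ℤ_[p], algebraMap ℤ_[p] ℚ_[p] m = v := ⟨⟨v, hv.le⟩, rfl⟩
  obtain ⟨c, hc⟩ := sq_dvd_extrapolate f g m
  have hcleared := congrArg (algebraMap ℤ_[p] ℚ_[p]) hc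
  simp only [map_add, map_sub, map_mul, map_pow, map_zero, map_ofNat,
    ← aeval_algebraMap_apply_eq_algebraMap_eval] at hcleared
  set v := algebraMap ℤ_[p] ℚ_[p] m
  have hcommon : 3 * (aeval 0 f / aeval 0 g) - 4 * (aeval v f / aeval v g) +
      aeval (4 * v) f / aeval (4 * v) g =
        v ^ 2 * algebraMap ℤ_[p] ℚ_[p] c / (aeval 0 g * aeval v g * aeval (4 * v) g) := by
    rw [← hcleared]
    field_simp
  rw [hcommon, norm_div, norm_mul, norm_mul, norm_mul, hg, hgv, hg4v, mul_one, mul_one, div_one,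
    norm_pow]
  exact mul_le_of_le_one_right (by positivity) (PadicInt.norm_le_one c)

lemma norm_factorial_of_lt_sq {m : ℕ} (hm : m < p ^ 2) :
    ‖(m ! : ℚ_[p])‖ = (p : ℝ) ^ (-(m / p : ℕ) : ℤ) := by
  have hval : padicValNat p m ! = m / p := by
    rw [padicValNat_factorial (Nat.log_lt_of_lt_pow' two_ne_zero hm)]
    simp
  rw [Padic.norm_eq_zpow_neg_valuation (mod_cast m.factorial_ne_zero), Padic.valuation_natCast,
    hval]

lemma norm_factorial_of_lt {m : ℕ} (hm : m < p) : ‖(m ! : ℚ_[p])‖ = 1 := by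
  rw [norm_factorial_of_lt_sq (hm.trans_le (Nat.le_self_pow two_ne_zero p)), Nat.div_eq_of_lt hm,
    Nat.cast_zero, neg_zero, zpow_zero]

lemma norm_wzCoeff_le (hp : 3 ≤ p) {n : ℕ} (hn : n < p) : ‖wzCoeff ℚ_[p] n‖ ≤ p := by
  have hp1 : (1 : ℝ) ≤ p := mod_cast (Fact.out : p.Prime).one_le
  have hp0 : (p : ℝ) ≠ 0 := by positivity
  have hsq : 3 * n + 1 < p ^ 2 := by nlinarith
  have hsign : ‖(-3 : ℚ_[p]) ^ n‖ ≤ 1 := by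
    rw [norm_pow, norm_neg]
    exact pow_le_one₀ (norm_nonneg _) (IsUltrametricDist.norm_natCast_le_one ℚ_[p] 3)
  have hdiv : (3 * n + 1) / p ≤ 2 * n / p + 1 := by
    rw [← Nat.add_div_right _ (by omega)]; exact Nat.div_le_div_right (by omega)
  have hnum := norm_factorial_of_lt_sq (p := p) (m := 2 * n) (by linarith)
  have hden := norm_factorial_of_lt_sq hsq
  rw [wzCoeff, norm_div, norm_mul, norm_mul, hnum, hden, norm_factorial_of_lt hn, one_mul]
  generalize 2 * n / p = a at hdiv ⊢
  generalize (3 * n + 1) / p = b at hdiv ⊢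
  calc ‖(-3 : ℚ_[p]) ^ n‖ * (p : ℝ) ^ (-a : ℤ) / (p : ℝ) ^ (-b : ℤ)
      ≤ 1 * (p : ℝ) ^ (-a : ℤ) / (p : ℝ) ^ (-b : ℤ) := by gcongr
    _ = (p : ℝ) ^ (-a - -b : ℤ) := by rw [one_mul, ← zpow_sub₀ hp0]
    _ ≤ (p : ℝ) ^ (1 : ℤ) := zpow_le_zpow_right₀ hp1 (by omega)
    _ = p := zpow_one _

lemma norm_three (hp : 3 < p) : ‖(3 : ℚ_[p])‖ = 1 := by
  have hcop : p.Coprime 3 := (Nat.coprime_primes Fact.out Nat.prime_three).2 hp.ne'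
  exact_mod_cast Padic.norm_natCast_eq_one_iff.2 hcop

lemma norm_denProd_zero (hp : 3 < p) {n : ℕ} (hn : n < p) : ‖denProd (0 : ℚ_[p]) n‖ = 1 := by
  rw [denProd_zero, norm_pow, norm_mul, norm_pow, norm_three hp, norm_factorial_of_lt hn, one_pow,
    one_mul, one_pow]

lemma exists_wzTerm_eq_aeval_div (hp : 3 < p) {n : ℕ} (hn : n < p) :
    ∃ f g : ℤ_[p][X], ‖aeval (0 : ℚ_[p]) g‖ = 1 ∧ ∀ q : ℚ_[p],
      wzTerm q 0 n = wzCoeff ℚ_[p] n * (aeval (q ^ 2) f / aeval (q ^ 2) g) := by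
  let f : ℤ_[p][X] :=
    (∏ i ∈ range n, ((3 * (i : ℤ_[p][X]) + 1) ^ 2 - X) * ((3 * (i : ℤ_[p][X]) + 2) ^ 2 - X)) *
      (45 * (n : ℤ_[p][X]) ^ 2 + 27 * (n : ℤ_[p][X]) + 4 - 2 * X)
  let g : ℤ_[p][X] := ∏ i ∈ range n, ((3 * ((i : ℤ_[p][X]) + 1)) ^ 2 - 2 ^ 2 * X)
  have hf (q : ℚ_[p]) :
      aeval (q ^ 2) f = numProd q 0 n * (45 * n ^ 2 + 27 * n + 4 - 2 * q ^ 2) := by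
    simp [f, numProd, quarticFactor, map_ofNat]
  have hg (q : ℚ_[p]) : aeval (q ^ 2) g = denProd q n := by
    simp [g, denProd, mul_pow, map_ofNat]
  refine ⟨f, g, ?_, fun q => ?_⟩
  · rw [← zero_pow two_ne_zero, hg, norm_denProd_zero hp hn]
  · rw [hf, hg, wzTerm]
    ring

lemma norm_wzTerm_extrapolate_le (hp : 3 < p) {n : ℕ} (hn : n < p) :
    ‖3 * wzTerm (0 : ℚ_[p]) 0 n - 4 * wzTerm (p : ℚ_[p]) 0 n + wzTerm ((2 * p : ℕ) : ℚ_[p]) 0 n‖ ≤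
      (p : ℝ) ^ (-3 : ℤ) := by
  have hp0 : (p : ℝ) ≠ 0 := mod_cast (Fact.out : p.Prime).ne_zero
  obtain ⟨f, g, hg, hfg⟩ := exists_wzTerm_eq_aeval_div hp hn
  have hv : ‖(p : ℚ_[p]) ^ 2‖ < 1 := by
    rw [norm_pow]; exact pow_lt_one₀ (norm_nonneg _) Padic.norm_p_lt_one two_ne_zero
  have h2p : ((2 * p : ℕ) : ℚ_[p]) ^ 2 = 4 * p ^ 2 := by push_cast; ring
  calc _ = ‖wzCoeff ℚ_[p] n‖ * ‖3 * (aeval 0 f / aeval 0 g) -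
          4 * (aeval ((p : ℚ_[p]) ^ 2) f / aeval ((p : ℚ_[p]) ^ 2) g) +
          aeval (4 * (p : ℚ_[p]) ^ 2) f / aeval (4 * (p : ℚ_[p]) ^ 2) g‖ := by
        rw [hfg, hfg, hfg, zero_pow two_ne_zero, h2p, ← norm_mul]; congr 1; ring
    _ ≤ p * ‖(p : ℚ_[p]) ^ 2‖ ^ 2 := by
        gcongr
        · exact norm_wzCoeff_le hp.le hn
        · exact norm_aeval_div_extrapolate_le f hg hv
    _ = (p : ℝ) ^ (-3 : ℤ) := by
        rw [Padic.norm_p_pow, ← zpow_natCast, ← zpow_mul, ← zpow_one_add₀ hp0]; norm_num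

end Padic

theorem stmt19_general (p : ℕ) [Fact p.Prime] (hp : 3 < p) :
    ‖(((∑ k ∈ Finset.range p,
            (15 * (k : ℚ) + 4) * (Nat.choose (2 * k) k : ℚ) ^ 2 *
              (Nat.choose (3 * k) k : ℚ) / (-27 : ℚ) ^ k) -
          4 * (if p % 3 = 1 then (1 : ℚ) else -1) * p : ℚ) : ℚ_[p])‖
      ≤ (p : ℝ) ^ (-3 : ℤ) := by
  have hprime : p.Prime := Fact.out
  have h3 : ¬ 3 ∣ p := fun h => hp.ne ((Nat.prime_dvd_prime_iff_eq Nat.prime_three hprime).1 h)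
  push_cast [apply_ite (Rat.cast : ℚ → ℚ_[p])]
  simp_rw [← wzTerm_zero_zero]
  set S : ℚ_[p] := ∑ n ∈ range p, wzTerm 0 0 n
  set ε : ℚ_[p] := if p % 3 = 1 then 1 else -1 with hε
  have hsum_p : ∑ n ∈ range p, wzTerm (p : ℚ_[p]) 0 n = 2 * ε * p :=
    sum_wzTerm_natCast h3 (by omega)
  have hsum_2p : ∑ n ∈ range p, wzTerm ((2 * p : ℕ) : ℚ_[p]) 0 n = -(4 * ε * p) := by
    have hsign : (if 2 * p % 3 = 1 then 1 else -1 : ℚ_[p]) = -ε := by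
      rcases (by omega : p % 3 = 1 ∨ p % 3 = 2) with h | h <;>
        simp [hε, Nat.mul_mod, h]
    rw [sum_wzTerm_natCast (by omega) (by omega), hsign]
    push_cast; ring
  have hextrapolate : 3 * (S - 4 * ε * p) = ∑ n ∈ range p, (3 * wzTerm (0 : ℚ_[p]) 0 n -
      4 * wzTerm (p : ℚ_[p]) 0 n + wzTerm ((2 * p : ℕ) : ℚ_[p]) 0 n) := by
    rw [sum_add_distrib, sum_sub_distrib, ← mul_sum, ← mul_sum, hsum_p, hsum_2p]
    ring
  rw [← one_mul ‖_‖, ← norm_three hp, ← norm_mul, hextrapolate]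
  exact IsUltrametricDist.norm_sum_le_of_forall_le_of_nonneg (by positivity)
    fun n hn => norm_wzTerm_extrapolate_le hp (mem_range.1 hn)

theorem stmt19 (p : ℕ) [Fact p.Prime] (hp : 3 < p) :
    ‖(((∑ k ∈ Finset.range p,
            (15 * (k : ℚ) + 4) * (Nat.choose (2 * k) k : ℚ) ^ 2 *
              (Nat.choose (3 * k) k : ℚ) / (-27 : ℚ) ^ k) -
          4 * (if p % 3 = 1 then (1 : ℚ) else -1) * p : ℚ) : ℚ_[p])‖
      ≤ (p : ℝ) ^ (-2 : ℤ) :=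
  (stmt19_general p hp).trans <|
    zpow_le_zpow_right₀ (mod_cast (Fact.out : p.Prime).one_le) (by norm_num)
end
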